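/- arXiv:1312.7516 — 3 statements merged into one kernel-verified Lean document; each statement's English description precedes it below -/
import Mathlib

section
/- For every integer d ≥ 0 there exists a polynomial q with rational coefficients of degree exactly 2d, with leading coefficient 1/(2^d · d!) (that is, 1/(2d)!!), such that q(ν) = S(ν+d, ν) for every positive integer ν. -/
/-- The Stirling number of the second kind `S(p, q)`: the number of partitions of a
set with `p` elements into `q` nonempty blocks. -/
noncomputable def stirlingSecond (p q : ℕ) : ℕ :=
  Nat.card {P : Finpartition (Finset.univ : Finset (Fin p)) // P.parts.card = q}

/-!
The recurrence `S(n + 1, k + 1) = (k + 1) S(n, k + 1) + S(n, k)` comes from deleting one element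
from a partition. On the diagonals `f_d(ν) = S(ν + d, ν)` it reads
`f_{d+1}(ν + 1) - f_{d+1}(ν) = (ν + 1) f_d(ν + 1)`, so `f_{d+1}` is an indefinite sum of a
polynomial of degree one more than `f_d`. Summation, carried out on monomials by Bernoulli
polynomials, raises the degree by one again, from `2d + 1` to `2d + 2`, and divides the leading
coefficient by `2d + 2`.
-/

section Partitions

open Finset

variable {α : Type*} [DecidableEq α] {s : Finset α} {a : α}

theorem insert_erase_eq_insert (t : Finset α) (b : α) :
    insert b (t.erase b) = insert b t := by
  grind

theorem subset_of_mem_insert_empty_parts {P : Finpartition s} {B : Finset α}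
    (hB : B ∈ insert ∅ P.parts) : B ⊆ s := by
  rcases mem_insert.1 hB with rfl | hB
  exacts [empty_subset s, P.subset hB]

/-- The partition of `insert a s` obtained from a partition `P` of `s` by adding `a` to the block
`B`. The choice `B = ∅` is allowed and makes `{a}` a new block. -/
def insertIntoBlock (ha : a ∉ s) (P : Finpartition s) (B : Finset α) (hB : B ∈ insert ∅ P.parts) :
    Finpartition (insert a s) where
  parts := insert (insert a B) (P.parts.erase B)
  supIndep := by
    have disjoint_block : ∀ C ∈ P.parts.erase B, Disjoint (insert a B) C := by
      intro C hC
      obtain ⟨hCB, hC⟩ := mem_erase.1 hC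
      refine disjoint_insert_left.2 ⟨fun haC => ha (P.subset hC haC), ?_⟩
      rcases mem_insert.1 hB with rfl | hB
      exacts [disjoint_empty_left C, P.disjoint hB hC hCB.symm]
    rw [supIndep_iff_pairwiseDisjoint, coe_insert]
    exact (P.disjoint.subset (erase_subset B P.parts)).insert fun C hC _ => disjoint_block C hC
  sup_parts := by
    calc (insert (insert a B) (P.parts.erase B)).sup id
        = insert a (B ⊔ (P.parts.erase B).sup id) := by simp
      _ = insert a (B ⊔ P.parts.sup id) := by
        rw [← id_eq B, ← sup_insert, ← sup_insert, id_eq, insert_erase_eq_insert]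
      _ = insert a s := by
        rw [P.sup_parts, sup_eq_right.2 (subset_of_mem_insert_empty_parts hB)]
  bot_notMem := by simp [(insert_ne_empty a B).symm, P.empty_notMem_parts]

@[simp]
theorem insertIntoBlock_parts (ha : a ∉ s) (P : Finpartition s) (B : Finset α)
    (hB : B ∈ insert ∅ P.parts) :
    (insertIntoBlock ha P B hB).parts = insert (insert a B) (P.parts.erase B) :=
  rfl

theorem insert_notMem_erase_parts (ha : a ∉ s) (P : Finpartition s) (B : Finset α) :
    insert a B ∉ P.parts.erase B :=
  fun h => ha (P.subset (mem_of_mem_erase h) (mem_insert_self a B))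

theorem card_insertIntoBlock_parts (ha : a ∉ s) (P : Finpartition s) (B : Finset α)
    (hB : B ∈ insert ∅ P.parts) :
    #(insertIntoBlock ha P B hB).parts = #(P.parts.erase B) + 1 :=
  card_insert_of_notMem (insert_notMem_erase_parts ha P B)

theorem insertIntoBlock_part_self (ha : a ∉ s) (P : Finpartition s) (B : Finset α)
    (hB : B ∈ insert ∅ P.parts) : (insertIntoBlock ha P B hB).part a = insert a B :=
  Finpartition.part_eq_of_mem _ (mem_insert_self _ _) (mem_insert_self a B)

theorem restrict_insert_parts (ha : a ∉ s) (Q : Finpartition (insert a s)) :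
    (Q.restrict (subset_insert a s)).parts =
      (insert ((Q.part a).erase a) (Q.parts.erase (Q.part a))).erase ∅ := by
  have part_mem : Q.part a ∈ Q.parts := Q.part_mem.2 (mem_insert_self a s)
  have part_inter : Q.part a ∩ s = (Q.part a).erase a := by
    have := Q.subset part_mem
    grind
  have other_inter : ∀ C ∈ Q.parts.erase (Q.part a), C ∩ s = C := by
    intro C hC
    obtain ⟨hCa, hC⟩ := mem_erase.1 hC
    have haC : a ∉ C := fun haC => hCa (Q.part_eq_of_mem hC haC).symm
    exact inter_eq_left.2 ((subset_insert_iff_of_notMem haC).1 (Q.subset hC))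
  calc (Q.parts.image (· ∩ s)).erase ∅
      = ((insert (Q.part a) (Q.parts.erase (Q.part a))).image (· ∩ s)).erase ∅ := by
        rw [insert_erase part_mem]
    _ = (insert ((Q.part a).erase a) (Q.parts.erase (Q.part a))).erase ∅ := by
        rw [image_insert, part_inter, image_congr other_inter, image_id']

theorem erase_part_mem_insert_empty_restrict_parts (ha : a ∉ s) (Q : Finpartition (insert a s)) :
    (Q.part a).erase a ∈ insert ∅ (Q.restrict (subset_insert a s)).parts := by
  rw [restrict_insert_parts ha, insert_erase_eq_insert]
  exact mem_insert_of_mem (mem_insert_self _ _)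

theorem restrict_insertIntoBlock (ha : a ∉ s) (P : Finpartition s) (B : Finset α)
    (hB : B ∈ insert ∅ P.parts) :
    (insertIntoBlock ha P B hB).restrict (subset_insert a s) = P := by
  have haB : a ∉ B := fun h => ha (subset_of_mem_insert_empty_parts hB h)
  ext1
  rw [restrict_insert_parts ha, insertIntoBlock_part_self, erase_insert haB, insertIntoBlock_parts,
    erase_insert (insert_notMem_erase_parts ha P B), insert_erase_eq_insert]
  rcases mem_insert.1 hB with rfl | hB
  · exact erase_insert P.empty_notMem_parts
  · rw [insert_eq_of_mem hB, erase_eq_of_notMem P.empty_notMem_parts]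

theorem erase_part_notMem_erase_parts (Q : Finpartition s) (a : α) :
    (Q.part a).erase a ∉ Q.parts.erase (Q.part a) := by
  intro h
  obtain ⟨hne, hmem⟩ := mem_erase.1 h
  obtain ⟨x, hx⟩ := Q.nonempty_of_mem_parts hmem
  have part_mem : Q.part a ∈ Q.parts :=
    Q.part_mem.2 (Q.part_nonempty.1 ⟨x, mem_of_mem_erase hx⟩)
  exact hne (Q.eq_of_mem_parts hmem part_mem hx (mem_of_mem_erase hx))

theorem insertIntoBlock_restrict (ha : a ∉ s) (Q : Finpartition (insert a s)) :
    insertIntoBlock ha (Q.restrict (subset_insert a s)) ((Q.part a).erase a)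
      (erase_part_mem_insert_empty_restrict_parts ha Q) = Q := by
  have part_mem : Q.part a ∈ Q.parts := Q.part_mem.2 (mem_insert_self a s)
  have mem_part : a ∈ Q.part a := Q.mem_part_self.2 (mem_insert_self a s)
  have empty_notMem : ∅ ∉ Q.parts.erase (Q.part a) :=
    fun h => Q.empty_notMem_parts (mem_of_mem_erase h)
  ext1
  rw [insertIntoBlock_parts, restrict_insert_parts ha, insert_erase mem_part, erase_right_comm,
    erase_insert (erase_part_notMem_erase_parts Q a), erase_eq_of_notMem empty_notMem,
    insert_erase part_mem]

/-- A partition of `insert a s` is a partition of `s` together with the block, possibly the empty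
one, to which `a` is added. -/
def finpartitionInsertEquiv (ha : a ∉ s) :
    Finpartition (insert a s) ≃ Σ P : Finpartition s, {B // B ∈ insert ∅ P.parts} where
  toFun Q := ⟨Q.restrict (subset_insert a s), (Q.part a).erase a,
    erase_part_mem_insert_empty_restrict_parts ha Q⟩
  invFun x := insertIntoBlock ha x.1 x.2 x.2.2
  left_inv := insertIntoBlock_restrict ha
  right_inv := by
    rintro ⟨P, B, hB⟩
    have haB : a ∉ B := fun h => ha (subset_of_mem_insert_empty_parts hB h)
    refine Sigma.subtype_ext (restrict_insertIntoBlock ha P B hB) ?_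
    simp [insertIntoBlock_part_self, erase_insert haB]

theorem sum_finpartition_insert {M : Type*} [AddCommMonoid M] (ha : a ∉ s) (f : ℕ → M) :
    ∑ Q : Finpartition (insert a s), f #Q.parts =
      ∑ P : Finpartition s, (f (#P.parts + 1) + #P.parts • f #P.parts) := by
  rw [← (finpartitionInsertEquiv ha).symm.sum_comp, Fintype.sum_sigma]
  refine sum_congr rfl fun P _ => ?_
  calc ∑ B : {B // B ∈ insert ∅ P.parts}, f #(insertIntoBlock ha P B B.2).parts
      = ∑ B ∈ insert ∅ P.parts, f (#(P.parts.erase B) + 1) := by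
        simp only [card_insertIntoBlock_parts]
        exact sum_coe_sort (insert ∅ P.parts) fun B => f (#(P.parts.erase B) + 1)
    _ = f (#P.parts + 1) + ∑ B ∈ P.parts, f (#(P.parts.erase B) + 1) := by
        rw [sum_insert P.empty_notMem_parts, erase_eq_of_notMem P.empty_notMem_parts]
    _ = f (#P.parts + 1) + #P.parts • f #P.parts := by
        rw [sum_congr rfl fun B hB => by rw [card_erase_add_one hB], sum_const]

theorem card_finpartition_card_parts_eq (s : Finset α) (k : ℕ) :
    #{P : Finpartition s | #P.parts = k} = Nat.stirlingSecond #s k := by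
  induction s using Finset.induction_on generalizing k with
  | empty =>
    have parts_eq (P : Finpartition (∅ : Finset α)) : P.parts = ∅ := P.parts_eq_empty_iff.2 rfl
    have card_eq : Fintype.card (Finpartition (∅ : Finset α)) = 1 :=
      Fintype.card_unique (α := Finpartition (⊥ : Finset α))
    cases k with
    | zero => simp [parts_eq, card_eq]
    | succ k => simp [parts_eq]
  | insert a s ha ih =>
    rw [card_insert_of_notMem ha, card_filter,
      sum_finpartition_insert ha fun m => if m = k then 1 else 0, sum_add_distrib]
    cases k with
    | zero => simp
    | succ k =>
      have sum_block : ∑ P : Finpartition s, #P.parts • (if #P.parts = k + 1 then 1 else 0)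
          = (k + 1) * #{P : Finpartition s | #P.parts = k + 1} := by
        rw [card_filter, mul_sum]
        refine sum_congr rfl fun P _ => ?_
        split_ifs with h <;> simp [h]
      simp only [Nat.add_right_cancel_iff]
      rw [sum_block, ← card_filter, ih, ih, Nat.stirlingSecond_succ_succ, add_comm]

theorem stirlingSecond_eq_natStirlingSecond (p q : ℕ) :
    stirlingSecond p q = Nat.stirlingSecond p q := by
  rw [stirlingSecond, Nat.card_eq_fintype_card, Fintype.card_subtype,
    card_finpartition_card_parts_eq, card_univ, Fintype.card_fin]

end Partitions

section Polynomials

open Polynomial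

/-- The indefinite sum of a rational polynomial `P`: the polynomial `Q` with `Q(0) = 0` and
`Q(x + 1) - Q(x) = P(x)`. On monomials it is given by Bernoulli polynomials, through
`B_{n+1}(x + 1) - B_{n+1}(x) = (n + 1) x ^ n`. -/
noncomputable def indefiniteSum (P : ℚ[X]) : ℚ[X] :=
  P.sum fun n c => C (c / (n + 1)) * (Polynomial.bernoulli (n + 1) - C (_root_.bernoulli (n + 1)))

theorem indefiniteSum_eval_zero (P : ℚ[X]) : (indefiniteSum P).eval 0 = 0 := by
  simp [indefiniteSum, Polynomial.sum, eval_finsetSum]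

theorem indefiniteSum_eval_add_one (P : ℚ[X]) (x : ℚ) :
    (indefiniteSum P).eval (x + 1) = (indefiniteSum P).eval x + P.eval x := by
  rw [eval_eq_sum (p := P), indefiniteSum, Polynomial.sum, Polynomial.sum, eval_finsetSum,
    eval_finsetSum, ← Finset.sum_add_distrib]
  refine Finset.sum_congr rfl fun n _ => ?_
  have : (n + 1 : ℚ) ≠ 0 := by positivity
  simp only [eval_mul, eval_sub, eval_C, add_comm x, bernoulli_eval_one_add, Nat.add_sub_cancel]
  push_cast
  field_simp
  ring

theorem coeff_indefiniteSum {P : ℚ[X]} {n : ℕ} (hn : P.natDegree ≤ n) :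
    (indefiniteSum P).coeff (n + 1) = P.coeff n / (n + 1) := by
  rw [indefiniteSum, Polynomial.sum, finsetSum_coeff]
  simp only [coeff_C_mul, coeff_sub, coeff_C_succ, coeff_bernoulli]
  rw [Finset.sum_eq_single n]
  · simp
  · intro i hi hin
    have : i < n := lt_of_le_of_ne ((le_natDegree_of_mem_supp i hi).trans hn) hin
    simp [this.not_ge]
  · simp +contextual

theorem natDegree_indefiniteSum {P : ℚ[X]} (hP : P ≠ 0) :
    (indefiniteSum P).natDegree = P.natDegree + 1 := by
  refine natDegree_eq_of_le_of_coeff_ne_zero ?_ ?_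
  · refine natDegree_le_iff_coeff_eq_zero.2 fun m hm => ?_
    obtain ⟨n, rfl⟩ : ∃ n, m = n + 1 := Nat.exists_eq_succ_of_ne_zero (Nat.ne_zero_of_lt hm)
    have hn : P.natDegree < n := Nat.lt_of_succ_lt_succ hm
    rw [coeff_indefiniteSum hn.le, coeff_eq_zero_of_natDegree_lt hn, zero_div]
  · rw [coeff_indefiniteSum le_rfl]
    exact div_ne_zero (leadingCoeff_ne_zero.2 hP) (by positivity)

theorem leadingCoeff_indefiniteSum (P : ℚ[X]) :
    (indefiniteSum P).leadingCoeff = P.leadingCoeff / (P.natDegree + 1) := by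
  rcases eq_or_ne P 0 with rfl | hP
  · simp [indefiniteSum]
  · rw [leadingCoeff, natDegree_indefiniteSum hP, coeff_indefiniteSum le_rfl, leadingCoeff]

/-- The polynomial whose value at `ν` is the Stirling number `S(ν + d, ν)`. The shift `taylor 1`
turns `x f_d(x)` into the increment `(x + 1) f_d(x + 1)` of the next diagonal. -/
noncomputable def stirlingPolynomial : ℕ → ℚ[X]
  | 0 => 1
  | d + 1 => indefiniteSum (taylor 1 (X * stirlingPolynomial d))

theorem stirlingPolynomial_eval (d ν : ℕ) :
    (stirlingPolynomial d).eval (ν : ℚ) = Nat.stirlingSecond (ν + d) ν := by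
  induction d generalizing ν with
  | zero => simp [stirlingPolynomial, Nat.stirlingSecond_self]
  | succ d ihd =>
    rw [stirlingPolynomial]
    induction ν with
    | zero => simp [indefiniteSum_eval_zero]
    | succ ν ihν =>
      calc (indefiniteSum (taylor 1 (X * stirlingPolynomial d))).eval ((ν + 1 : ℕ) : ℚ)
          = Nat.stirlingSecond (ν + (d + 1)) ν
            + (ν + 1) * (stirlingPolynomial d).eval ((ν + 1 : ℕ) : ℚ) := by
            rw [Nat.cast_add_one, indefiniteSum_eval_add_one, ihν, taylor_eval, eval_mul, eval_X]
        _ = Nat.stirlingSecond (ν + (d + 1) + 1) (ν + 1) := by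
            rw [ihd, Nat.stirlingSecond_succ_succ, add_right_comm ν 1 d, ← add_assoc ν d 1]
            push_cast
            ring
        _ = Nat.stirlingSecond (ν + 1 + (d + 1)) (ν + 1) := by rw [add_right_comm]

theorem stirlingPolynomial_ne_zero (d : ℕ) : stirlingPolynomial d ≠ 0 := by
  intro h
  have eval_one := stirlingPolynomial_eval d 1
  rw [add_comm, Nat.stirlingSecond_one_right, h] at eval_one
  simp at eval_one

theorem natDegree_stirlingPolynomial (d : ℕ) : (stirlingPolynomial d).natDegree = 2 * d := by
  induction d with
  | zero => exact natDegree_one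
  | succ d ih =>
    have taylor_ne_zero : taylor 1 (X * stirlingPolynomial d) ≠ 0 :=
      (taylor_eq_zero _ _).not.2 (mul_ne_zero X_ne_zero (stirlingPolynomial_ne_zero d))
    rw [stirlingPolynomial, natDegree_indefiniteSum taylor_ne_zero, natDegree_taylor,
      natDegree_X_mul (stirlingPolynomial_ne_zero d), ih]
    ring

theorem leadingCoeff_stirlingPolynomial (d : ℕ) :
    (stirlingPolynomial d).leadingCoeff = 1 / (2 ^ d * d.factorial) := by
  induction d with
  | zero => simp [stirlingPolynomial]
  | succ d ih =>
    rw [stirlingPolynomial, leadingCoeff_indefiniteSum, natDegree_taylor,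
      natDegree_X_mul (stirlingPolynomial_ne_zero d), natDegree_stirlingPolynomial,
      leadingCoeff_taylor, leadingCoeff_mul, leadingCoeff_X, ih, Nat.factorial_succ]
    push_cast
    field_simp
    ring

end Polynomials

/-- For every `d ≥ 0` there is a polynomial of degree exactly `2d` with rational
coefficients, with leading coefficient `1/(2^d · d!) = 1/(2d)!!`, whose value at every
positive integer `ν` is the Stirling number `S(ν+d, ν)`. -/
theorem exists_stirling_polynomial (d : ℕ) :
    ∃ q : Polynomial ℚ, q.degree = (2 * d : ℕ) ∧
      q.leadingCoeff = 1 / (2 ^ d * Nat.factorial d) ∧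
      ∀ ν : ℕ, 1 ≤ ν → q.eval (ν : ℚ) = stirlingSecond (ν + d) ν := by
  refine ⟨stirlingPolynomial d, ?_, leadingCoeff_stirlingPolynomial d, fun ν _ => ?_⟩
  · rw [Polynomial.degree_eq_natDegree (stirlingPolynomial_ne_zero d),
      natDegree_stirlingPolynomial]
  · rw [stirlingPolynomial_eval, stirlingSecond_eq_natStirlingSecond]
end

section
/- For every positive integer μ: Σ_{ν=1}^{μ} ν · μ^{μ−ν} · μ!/(μ−ν)! = μ^{μ+1}. -/
/-!
Count the words of length `μ + 1` over an alphabet of `μ` letters by the position of the first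
repeated letter. If the first `ν` letters are distinct and the next one repeats one of them, there
are `μ!/(μ-ν)!` choices for these `ν` letters, `ν` for the repeated one and `μ^(μ-ν)` for the rest
of the word. By the pigeonhole principle every word of this length has a repetition.
-/

theorem mul_descFactorial_eq_add_descFactorial_succ (n k : ℕ) :
    n * n.descFactorial k = k * n.descFactorial k + n.descFactorial (k + 1) := by
  rcases le_or_gt k n with hkn | hnk
  · rw [Nat.descFactorial_succ, ← add_mul, Nat.add_sub_of_le hkn]
  · simp [Nat.descFactorial_of_lt hnk]

theorem pow_eq_sum_add_descFactorial (n k : ℕ) :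
    n ^ k = ∑ i ∈ Finset.range k, i * n ^ (k - 1 - i) * n.descFactorial i
      + n.descFactorial k := by
  induction k with
  | zero => simp
  | succ k ih =>
    have extend_words : n * ∑ i ∈ Finset.range k, i * n ^ (k - 1 - i) * n.descFactorial i =
        ∑ i ∈ Finset.range k, i * n ^ (k - i) * n.descFactorial i := by
      rw [Finset.mul_sum]
      refine Finset.sum_congr rfl fun i hi => ?_
      have exponent : k - i = k - 1 - i + 1 := by
        have := Finset.mem_range.mp hi
        omega
      rw [exponent, pow_succ]
      ring
    calc n ^ (k + 1)
        = n * ∑ i ∈ Finset.range k, i * n ^ (k - 1 - i) * n.descFactorial i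
            + n * n.descFactorial k := by rw [pow_succ', ih, mul_add]
      _ = ∑ i ∈ Finset.range k, i * n ^ (k - i) * n.descFactorial i
            + (k * n.descFactorial k + n.descFactorial (k + 1)) := by
          rw [extend_words, mul_descFactorial_eq_add_descFactorial_succ]
      _ = ∑ i ∈ Finset.range (k + 1), i * n ^ (k + 1 - 1 - i) * n.descFactorial i
            + n.descFactorial (k + 1) := by
          simp [Finset.sum_range_succ, add_assoc]

theorem pow_succ_self_eq_sum_descFactorial (n : ℕ) :
    n ^ (n + 1) = ∑ i ∈ Finset.range (n + 1), i * n ^ (n - i) * n.descFactorial i := by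
  simpa [Nat.descFactorial_of_lt n.lt_succ_self] using pow_eq_sum_add_descFactorial n (n + 1)

/-- For every positive integer `μ`:
`Σ_{ν=1}^{μ} ν · μ^(μ-ν) · μ!/(μ-ν)! = μ^(μ+1)`. -/
theorem rooted_forest_identity (μ : ℕ) (hμ : 1 ≤ μ) :
    ∑ ν ∈ Finset.Icc 1 μ,
        ν * μ ^ (μ - ν) * (Nat.factorial μ / Nat.factorial (μ - ν)) = μ ^ (μ + 1) := by
  calc ∑ ν ∈ Finset.Icc 1 μ, ν * μ ^ (μ - ν) * (Nat.factorial μ / Nat.factorial (μ - ν))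
      = ∑ ν ∈ Finset.Icc 1 μ, ν * μ ^ (μ - ν) * μ.descFactorial ν :=
        Finset.sum_congr rfl fun ν hν => by
          rw [Nat.descFactorial_eq_div (Finset.mem_Icc.mp hν).2]
    _ = ∑ ν ∈ Finset.range (μ + 1), ν * μ ^ (μ - ν) * μ.descFactorial ν := by
        rw [Finset.range_eq_Ico, Finset.sum_eq_sum_Ico_succ_bot μ.add_one_pos, zero_mul, zero_mul,
          zero_add, zero_add, Finset.Ico_add_one_right_eq_Icc]
    _ = μ ^ (μ + 1) := (pow_succ_self_eq_sum_descFactorial μ).symm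
end

section
/- For every positive integer m and all nonnegative integers k_1,…,k_m, there exists a polynomial Q with rational coefficients of degree |k|+m−1 (where |k| = k_1+⋯+k_m) with leading coefficient k_1!·k_2!⋯k_m!/(|k|+m−1)!, such that for every integer n ≥ m: Σ α_1^{k_1}·α_2^{k_2}⋯α_m^{k_m} = Q(n), where the sum runs over all tuples of positive integers (α_1,…,α_m) with α_1+⋯+α_m = n. -/
/-!
Write `u = x / (1 - x)`. For `j : ℕ` the coefficient of `xⁿ` in `u ^ (j + 1)` is `(n - 1).choose j`
for `n ≥ 1`, a polynomial in `n` of degree `j` with leading coefficient `1 / j!`. These polynomials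
form a basis, so the generating functions `∑_{n ≥ 1} P(n) xⁿ` of polynomials `P` are exactly the
series `u p(u)` with `p` a polynomial; `P` and `p` have the same degree `d`, and the leading
coefficient of `p` is `d!` times that of `P`. The sum over compositions is a coefficient of a
product of `m` such series, hence of `u · u ^ (m - 1) ∏ i, p_i(u)`, and translating the polynomial
`X ^ (m - 1) ∏ i, p_i` back gives the degree and the leading coefficient.
-/

open Polynomial Finset
open scoped Nat

section ChoosePred

variable {K : Type*} [Field K]

variable (K) in
/-- The polynomial whose value at each integer `n ≥ 1` is the binomial coefficient
`(n - 1).choose j`. -/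
noncomputable def choosePred (j : ℕ) : K[X] :=
  C (j ! : K)⁻¹ * (descPochhammer K j).comp (X - C 1)

theorem leadingCoeff_choosePred (j : ℕ) : (choosePred K j).leadingCoeff = (j ! : K)⁻¹ := by
  have hne : (X - C (1 : K)).natDegree ≠ 0 := by rw [natDegree_X_sub_C]; exact one_ne_zero
  rw [choosePred, leadingCoeff_mul, leadingCoeff_comp hne, leadingCoeff_C, monic_descPochhammer,
    leadingCoeff_X_sub_C, one_pow, mul_one, mul_one]

variable [CharZero K]

theorem eval_choosePred (j : ℕ) {n : ℕ} (hn : n ≠ 0) :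
    (choosePred K j).eval (n : K) = (n - 1).choose j := by
  obtain ⟨n, rfl⟩ := Nat.exists_eq_succ_of_ne_zero hn
  simp [choosePred, descPochhammer_eval_eq_descFactorial, Nat.descFactorial_eq_factorial_mul_choose,
    Nat.factorial_ne_zero]

theorem degree_choosePred (j : ℕ) : (choosePred K j).degree = j := by
  have hne : choosePred K j ≠ 0 := by
    simp [← leadingCoeff_ne_zero, leadingCoeff_choosePred, Nat.factorial_ne_zero]
  rw [degree_eq_natDegree hne, choosePred,
    natDegree_C_mul (inv_ne_zero (Nat.cast_ne_zero.2 j.factorial_ne_zero)), natDegree_comp,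
    natDegree_X_sub_C, mul_one, descPochhammer_natDegree]

theorem natDegree_choosePred (j : ℕ) : (choosePred K j).natDegree = j :=
  natDegree_eq_of_degree_eq_some (degree_choosePred j)

variable (K) in
/-- The basis of `K[X]` formed by the polynomials `choosePred K j`: the Newton basis with base
point `1`. -/
noncomputable def newtonBasis : Module.Basis ℕ K K[X] :=
  Sequence.basis ⟨choosePred K, degree_choosePred⟩ fun j ↦
    (leadingCoeff_ne_zero.2 (Sequence.ne_zero _ j)).isUnit

theorem newtonBasis_apply (j : ℕ) : newtonBasis K j = choosePred K j :=
  Sequence.basis_eq_self _ _ j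

variable (K) in
/-- The linear automorphism of `K[X]` sending `X ^ j` to `choosePred K j`: it turns the coefficients
of a polynomial into coordinates in the Newton basis. -/
noncomputable def newtonEquiv : K[X] ≃ₗ[K] K[X] :=
  (basisMonomials K).equiv (newtonBasis K) (Equiv.refl ℕ)

theorem newtonEquiv_X_pow (j : ℕ) : newtonEquiv K (X ^ j) = choosePred K j := by
  have h := (basisMonomials K).equiv_apply j (newtonBasis K) (Equiv.refl ℕ)
  simpa only [newtonEquiv, coe_basisMonomials, monomial_one_right_eq_X_pow, Equiv.refl_apply,
    newtonBasis_apply] using h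

theorem newtonEquiv_eq_sum (p : K[X]) :
    newtonEquiv K p = ∑ j ∈ range (p.natDegree + 1), p.coeff j • choosePred K j := by
  conv_lhs => rw [p.as_sum_range_C_mul_X_pow]
  simp only [map_sum, ← smul_eq_C_mul, map_smul, newtonEquiv_X_pow]

theorem natDegree_newtonEquiv_le (p : K[X]) : (newtonEquiv K p).natDegree ≤ p.natDegree := by
  rw [newtonEquiv_eq_sum]
  refine natDegree_sum_le_of_forall_le _ _ fun j hj ↦ (natDegree_smul_le _ _).trans ?_
  rw [natDegree_choosePred]
  exact mem_range_succ_iff.1 hj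

theorem coeff_natDegree_newtonEquiv (p : K[X]) :
    (newtonEquiv K p).coeff p.natDegree = p.leadingCoeff / (p.natDegree)! := by
  have hlower : ∀ j ∈ range p.natDegree, (p.coeff j • choosePred K j).coeff p.natDegree = 0 := by
    intro j hj
    have hlt : (choosePred K j).natDegree < p.natDegree := by
      rw [natDegree_choosePred]
      exact mem_range.1 hj
    rw [coeff_smul, coeff_eq_zero_of_natDegree_lt hlt, smul_zero]
  have htop : (choosePred K p.natDegree).coeff p.natDegree = ((p.natDegree)! : K)⁻¹ := by
    rw [← leadingCoeff_choosePred, leadingCoeff, natDegree_choosePred]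
  rw [newtonEquiv_eq_sum, finsetSum_coeff, sum_range_succ, sum_eq_zero hlower, zero_add, coeff_smul,
    htop, smul_eq_mul, coeff_natDegree, div_eq_mul_inv]

theorem natDegree_newtonEquiv (p : K[X]) : (newtonEquiv K p).natDegree = p.natDegree := by
  rcases eq_or_ne p 0 with rfl | hp
  · simp
  refine natDegree_eq_of_le_of_coeff_ne_zero (natDegree_newtonEquiv_le p) ?_
  rw [coeff_natDegree_newtonEquiv]
  exact div_ne_zero (leadingCoeff_ne_zero.2 hp) (Nat.cast_ne_zero.2 (Nat.factorial_ne_zero _))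

theorem leadingCoeff_newtonEquiv (p : K[X]) :
    (newtonEquiv K p).leadingCoeff = p.leadingCoeff / (p.natDegree)! := by
  rw [leadingCoeff, natDegree_newtonEquiv, coeff_natDegree_newtonEquiv]

theorem natDegree_newtonEquiv_symm (P : K[X]) :
    ((newtonEquiv K).symm P).natDegree = P.natDegree := by
  rw [← natDegree_newtonEquiv, LinearEquiv.apply_symm_apply]

theorem leadingCoeff_newtonEquiv_symm (P : K[X]) :
    ((newtonEquiv K).symm P).leadingCoeff = P.leadingCoeff * (P.natDegree)! := by
  have h := leadingCoeff_newtonEquiv ((newtonEquiv K).symm P)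
  rw [LinearEquiv.apply_symm_apply, natDegree_newtonEquiv_symm] at h
  rw [h, div_mul_cancel₀ _ (Nat.cast_ne_zero.2 (Nat.factorial_ne_zero _))]

end ChoosePred

section ValueSeries

variable (R : Type*) [CommSemiring R]

/-- The generating function `∑_{n ≥ 1} P(n) xⁿ` of the values of a polynomial `P` at the positive
integers, as a linear map. -/
def valueSeries : R[X] →ₗ[R] PowerSeries R where
  toFun P := PowerSeries.mk fun n ↦ if n = 0 then 0 else P.eval (n : R)
  map_add' P Q := by ext n; by_cases hn : n = 0 <;> simp [hn]
  map_smul' c P := by ext n; by_cases hn : n = 0 <;> simp [hn]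

variable {R}

theorem coeff_valueSeries (P : R[X]) (n : ℕ) :
    PowerSeries.coeff n (valueSeries R P) = if n = 0 then 0 else P.eval (n : R) := by
  simp [valueSeries]

end ValueSeries

section GeomSeries

/-- The power series `x / (1 - x)`. -/
noncomputable def geomSeries (R : Type*) [Semiring R] : PowerSeries R :=
  PowerSeries.X * PowerSeries.mk 1

theorem coeff_geomSeries_pow_succ {R : Type*} [CommRing R] (j n : ℕ) :
    PowerSeries.coeff n (geomSeries R ^ (j + 1)) = if n = 0 then 0 else ((n - 1).choose j : R) := by
  rw [geomSeries, mul_pow, PowerSeries.mk_one_pow_eq_mk_choose_add, PowerSeries.coeff_X_pow_mul',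
    PowerSeries.coeff_mk]
  rcases lt_or_ge n (j + 1) with hlt | hle
  · rw [if_neg hlt.not_ge]
    split_ifs with hn
    · rfl
    · rw [Nat.choose_eq_zero_of_lt (by lia), Nat.cast_zero]
  · rw [if_pos hle, if_neg (by lia), show j + (n - (j + 1)) = n - 1 by lia]

variable {K : Type*} [Field K] [CharZero K]

theorem valueSeries_newtonEquiv (p : K[X]) :
    valueSeries K (newtonEquiv K p) = geomSeries K * aeval (geomSeries K) p := by
  suffices h : valueSeries K ∘ₗ (newtonEquiv K : K[X] →ₗ[K] K[X]) =
      LinearMap.mulLeft K (geomSeries K) ∘ₗ (aeval (geomSeries K)).toLinearMap from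
    LinearMap.congr_fun h p
  refine (basisMonomials K).ext fun j ↦ PowerSeries.ext fun n ↦ ?_
  have hpow : geomSeries K * aeval (geomSeries K) (X ^ j : K[X]) = geomSeries K ^ (j + 1) := by
    rw [map_pow, aeval_X, pow_succ']
  simp only [coe_basisMonomials, monomial_one_right_eq_X_pow, LinearMap.comp_apply,
    LinearEquiv.coe_coe, newtonEquiv_X_pow, AlgHom.toLinearMap_apply, LinearMap.mulLeft_apply, hpow,
    coeff_valueSeries, coeff_geomSeries_pow_succ]
  exact if_ctx_congr Iff.rfl (fun _ ↦ rfl) fun hn ↦ eval_choosePred j hn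

theorem prod_valueSeries {ι : Type*} [Fintype ι] [Nonempty ι] (P : ι → K[X]) :
    ∏ i, valueSeries K (P i) = valueSeries K
      (newtonEquiv K (X ^ (Fintype.card ι - 1) * ∏ i, (newtonEquiv K).symm (P i))) := by
  have hfactor (i : ι) : valueSeries K (P i) =
      geomSeries K * aeval (geomSeries K) ((newtonEquiv K).symm (P i)) := by
    rw [← valueSeries_newtonEquiv, LinearEquiv.apply_symm_apply]
  simp only [hfactor]
  rw [valueSeries_newtonEquiv, prod_mul_distrib, prod_const, card_univ, map_mul, map_pow, aeval_X,
    map_prod, ← mul_assoc, mul_pow_sub_one Fintype.card_ne_zero]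

end GeomSeries

section Compositions

variable (ι : Type*) [Fintype ι] [DecidableEq ι]

/-- The compositions of `n` into positive parts indexed by `ι`. Restricting the parts to `[1, n]`
loses nothing and makes finiteness evident. -/
def compositionTuples (n : ℕ) : Finset (ι → ℕ) :=
  filter (fun α ↦ ∑ i, α i = n) (Fintype.piFinset fun _ ↦ Icc 1 n)

variable {ι}

theorem mem_compositionTuples {n : ℕ} {α : ι → ℕ} :
    α ∈ compositionTuples ι n ↔ (∀ i, α i ≠ 0) ∧ ∑ i, α i = n := by
  simp only [compositionTuples, mem_filter, Fintype.mem_piFinset, mem_Icc, Nat.one_le_iff_ne_zero]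
  refine and_congr_left fun hsum ↦ forall_congr' fun i ↦ and_iff_left ?_
  exact hsum ▸ single_le_sum_of_canonicallyOrdered (mem_univ i)

theorem coeff_prod_valueSeries {R : Type*} [CommSemiring R] (P : ι → R[X]) (n : ℕ) :
    PowerSeries.coeff n (∏ i, valueSeries R (P i)) =
      ∑ α ∈ compositionTuples ι n, ∏ i, (P i).eval (α i : R) := by
  rw [PowerSeries.coeff_prod]
  symm
  refine sum_of_injOn Finsupp.equivFunOnFinite.symm (Equiv.injective _).injOn ?_ ?_ ?_
  · intro α hα
    simpa using (mem_compositionTuples.1 hα).2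
  -- A tuple with a zero part contributes nothing, as the constant terms vanish.
  · intro l hl hnotMem
    obtain ⟨i, hi⟩ : ∃ i, l i = 0 := by
      by_contra! hne
      exact hnotMem ⟨l, mem_compositionTuples.2 ⟨hne, (mem_finsuppAntidiag.1 hl).1⟩, by simp⟩
    exact prod_eq_zero (mem_univ i) (by rw [coeff_valueSeries, if_pos hi])
  · intro α hα
    refine prod_congr rfl fun i _ ↦ ?_
    rw [coeff_valueSeries, Finsupp.equivFunOnFinite_symm_apply_apply,
      if_neg ((mem_compositionTuples.1 hα).1 i)]

end Compositions

theorem exists_composition_power_sum_polynomial_general {ι K : Type*} [Fintype ι] [DecidableEq ι]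
    [Nonempty ι] [Field K] [CharZero K] (P : ι → K[X]) (hP : ∀ i, P i ≠ 0) :
    ∃ Q : K[X],
      Q.degree = ((∑ i, (P i).natDegree) + Fintype.card ι - 1 : ℕ) ∧
      Q.leadingCoeff = (∏ i, (P i).leadingCoeff * ((P i).natDegree)!) /
        ((∑ i, (P i).natDegree) + Fintype.card ι - 1)! ∧
      ∀ n : ℕ, n ≠ 0 →
        ∑ α ∈ compositionTuples ι n, ∏ i, (P i).eval (α i : K) = Q.eval (n : K) := by
  set p : ι → K[X] := fun i ↦ (newtonEquiv K).symm (P i)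
  have hp (i : ι) : p i ≠ 0 := (newtonEquiv K).symm.map_ne_zero_iff.2 (hP i)
  set q : K[X] := X ^ (Fintype.card ι - 1) * ∏ i, p i with hq
  have hq0 : q ≠ 0 := mul_ne_zero (pow_ne_zero _ X_ne_zero) (prod_ne_zero_iff.2 fun i _ ↦ hp i)
  have hdeg : q.natDegree = ∑ i, (P i).natDegree + Fintype.card ι - 1 := by
    rw [hq, natDegree_X_pow_mul _ (prod_ne_zero_iff.2 fun i _ ↦ hp i),
      natDegree_prod _ _ fun i _ ↦ hp i, Nat.add_sub_assoc Fintype.card_pos]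
    simp only [p, natDegree_newtonEquiv_symm]
  refine ⟨newtonEquiv K q, ?_, ?_, fun n hn ↦ ?_⟩
  · rw [degree_eq_natDegree ((newtonEquiv K).map_ne_zero_iff.2 hq0), natDegree_newtonEquiv, hdeg]
  · rw [leadingCoeff_newtonEquiv, hdeg, hq, leadingCoeff_mul, leadingCoeff_X_pow, one_mul,
      leadingCoeff_prod]
    simp only [p, leadingCoeff_newtonEquiv_symm]
  · rw [← coeff_prod_valueSeries, prod_valueSeries, coeff_valueSeries, if_neg hn]

/-- For every positive integer `m` and all nonnegative integers `k₁, …, k_m` there is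
a polynomial `Q` with rational coefficients of degree `|k| + m - 1` and leading
coefficient `k₁!⋯k_m!/(|k|+m-1)!` such that, for every `n ≥ m`, the sum of
`α₁^{k₁}⋯α_m^{k_m}` over all compositions of `n` into `m` positive parts equals
`Q(n)`. -/
theorem exists_composition_power_sum_polynomial (m : ℕ) (hm : 1 ≤ m) (k : Fin m → ℕ) :
    ∃ Q : Polynomial ℚ,
      Q.degree = ((∑ i, k i) + m - 1 : ℕ) ∧
      Q.leadingCoeff = (∏ i, (Nat.factorial (k i) : ℚ)) /
        Nat.factorial ((∑ i, k i) + m - 1) ∧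
      ∀ n : ℕ, m ≤ n →
        ∑ α ∈ Finset.filter (fun α : Fin m → ℕ => ∑ i, α i = n)
            (Fintype.piFinset fun _ : Fin m => Finset.Icc 1 n),
          ∏ i, (α i : ℚ) ^ (k i) = Q.eval (n : ℚ) := by
  have : Nonempty (Fin m) := Fin.pos_iff_nonempty.1 hm
  obtain ⟨Q, hdeg, hlead, heval⟩ :=
    exists_composition_power_sum_polynomial_general (fun i ↦ (X : ℚ[X]) ^ k i) (by simp)
  exact ⟨Q, by simpa using hdeg, by simpa using hlead,
    fun n hn ↦ by simpa [compositionTuples] using heval n (by lia)⟩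
end
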